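/- arXiv:2109.07777 — 2 statements merged into one kernel-verified Lean document; each statement's English description precedes it below -/
import Mathlib

section
/- Let 0 < φ ≤ π/2, q = cot φ ≥ 0, 𝒩 = √(1+q²)/(1+q), and r₀ = (1−𝒩)/2. On ℝ^16 = ℝ⁴ ⊗ ℝ⁴ (control grabit ⊗ ReIm grabit, each factor indexed by byte-4 values 0,1,2,3), define S_full to act on the subspace where the control byte-4 value lies in {0,1} as (R₂ on the control) ⊗ 𝟙₄, where R₂ = [[1−r₀, r₀],[r₀, 1−r₀]] exchanges control values 0↔1 with probability r₀, and on the subspace where the control byte-4 value lies in {2,3} as 𝟙₂ ⊗ S, where S = (1/(1+q))·[[q,0,0,1],[0,q,1,0],[1,0,q,0],[0,1,0,q]]. Then S_full is a stochastic matrix and satisfies ∂₂ ∘ S_full = 𝒩·Ũ_φ ∘ ∂₂, where Ũ_φ is the block-diagonal 4×4 matrix diag(1,1) ⊕ [[cos φ, −sin φ],[sin φ, cos φ]] (the realification of the general phase gate diag(1, e^{iφ})). (Stochastic emulation of the general phase gate including the amplitude-reduction gate.) -/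
open scoped BigOperators Matrix

/-- Combine a byte-logical value `i` and a gradient value `σ` into a byte-4 value `2i+σ`. -/
def b4 (i σ : Fin 2) : Fin 4 := ⟨2 * i.val + σ.val, by omega⟩

/-- The two-grabit difference map `∂₂` on `ℝ^16 = ℝ⁴ ⊗ ℝ⁴`, each factor indexed by
byte-4 values `I = 2i+σ`. -/
noncomputable def del2b4 (P : Fin 4 × Fin 4 → ℝ) : Fin 2 × Fin 2 → ℝ :=
  fun p => ∑ σ₁ : Fin 2, ∑ σ₂ : Fin 2,
    (-1 : ℝ) ^ ((σ₁ : ℕ) + (σ₂ : ℕ)) * P (b4 p.1 σ₁, b4 p.2 σ₂)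

/-- A stochastic matrix: nonnegative entries, each column sums to 1. -/
def IsStochastic {α : Type*} [Fintype α] (S : Matrix α α ℝ) : Prop :=
  (∀ i j, 0 ≤ S i j) ∧ ∀ j, ∑ i, S i j = 1

/-- The amplitude-reduction gate `R₂` exchanging the two byte-4 values with probability `r`. -/
def R2mat (r : ℝ) : Matrix (Fin 2) (Fin 2) ℝ := !![1 - r, r; r, 1 - r]

/-- The stochastic map emulating the rotation gate, amplitude ratio `q`. -/
noncomputable def S_rot (q : ℝ) : Matrix (Fin 4) (Fin 4) ℝ :=
  (1 / (1 + q)) • !![q, 0, 0, 1; 0, q, 1, 0; 1, 0, q, 0; 0, 1, 0, q]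

/-- The full stochastic map for the general phase gate on control ⊗ ReIm grabit:
it acts as `R₂ ⊗ 𝟙₄` on the subspace with control byte-4 value in `{0,1}` and as
`𝟙₂ ⊗ S_rot q` on the subspace with control byte-4 value in `{2,3}`. -/
noncomputable def Sfull (q r : ℝ) : Matrix (Fin 4 × Fin 4) (Fin 4 × Fin 4) ℝ :=
  fun x y =>
    if hy : (y.1 : ℕ) < 2 then
      (if hx : (x.1 : ℕ) < 2 then
        R2mat r ⟨x.1, hx⟩ ⟨y.1, hy⟩ * (if x.2 = y.2 then 1 else 0)
      else 0)
    else
      (if x.1 = y.1 then 1 else 0) * S_rot q x.2 y.2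

/-- The realification `Ũ_φ = diag(1,1) ⊕ R_φ` of the general phase gate `diag(1, e^{iφ})`,
indexed by (logical qubit value, ReIm value). -/
noncomputable def Utilde (φ : ℝ) : Matrix (Fin 2 × Fin 2) (Fin 2 × Fin 2) ℝ :=
  fun x y =>
    if x.1 = y.1 then
      (if x.1 = 0 then (if x.2 = y.2 then 1 else 0)
       else !![Real.cos φ, -Real.sin φ; Real.sin φ, Real.cos φ] x.2 y.2)
    else 0

/-!
Write `D` for the one-grabit difference map, so that `∂₂ = D ⊗ D`. With `A` the exchange of the
control values `0 ↔ 1`, `Π` the projection onto the control values `{2, 3}`, and `E₀`, `E₁` the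
projections onto the logical control values, both gates are controlled operations:
`S_full = A ⊗ 1 + Π ⊗ S` and `Ũ_φ = E₀ ⊗ 1 + E₁ ⊗ R_φ`.
The intertwining relation thus reduces to the single-factor relations `D A = (1 - 2r) E₀ D`,
`D Π = E₁ D` and `D S = (1 + q)⁻¹ [[q, -1], [1, q]] D`. For `q = cot φ` the last matrix is
`𝒩 R_φ`, since `√(1 + q²) = 1 / sin φ`, and `r = r₀` makes the other branch shrink by the
same factor `1 - 2r = 𝒩`.
-/

open scoped Kronecker

section Stochastic

variable {m n : Type*} [Fintype m] [Fintype n]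

lemma isStochastic_iff_mem_colStochastic [DecidableEq n] {S : Matrix n n ℝ} :
    IsStochastic S ↔ S ∈ Matrix.colStochastic ℝ n :=
  Matrix.mem_colStochastic_iff_sum.symm

lemma IsStochastic.one [DecidableEq n] : IsStochastic (1 : Matrix n n ℝ) :=
  isStochastic_iff_mem_colStochastic.2 (one_mem _)

lemma IsStochastic.kronecker_add_kronecker {A B : Matrix m m ℝ} {S T : Matrix n n ℝ}
    (hA : ∀ i j, 0 ≤ A i j) (hB : ∀ i j, 0 ≤ B i j) (hAB : IsStochastic (A + B))
    (hS : IsStochastic S) (hT : IsStochastic T) : IsStochastic (A ⊗ₖ S + B ⊗ₖ T) := by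
  refine ⟨fun i j => add_nonneg (mul_nonneg (hA _ _) (hS.1 _ _))
    (mul_nonneg (hB _ _) (hT.1 _ _)), fun j => ?_⟩
  calc ∑ i, (A ⊗ₖ S + B ⊗ₖ T) i j
      = (∑ i, A i j.1) * ∑ k, S k j.2 + (∑ i, B i j.1) * ∑ k, T k j.2 := by
        simp only [Matrix.add_apply, Matrix.kroneckerMap_apply, Finset.sum_add_distrib,
          Fintype.sum_prod_type, Finset.sum_mul_sum]
    _ = ∑ i, (A + B) i j.1 := by
        simp only [hS.2, hT.2, mul_one, Matrix.add_apply, Finset.sum_add_distrib]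
    _ = 1 := hAB.2 j.1

end Stochastic

lemma kronecker_mul_kronecker_add_kronecker {R k l m n : Type*} [CommSemiring R]
    [Fintype k] [Fintype l] [Fintype m] [Fintype n]
    {C : Matrix k m R} {D : Matrix l n R} {A B : Matrix m m R} {S T : Matrix n n R}
    {A' B' : Matrix k k R} {S' T' : Matrix l l R}
    (hA : C * A = A' * C) (hB : C * B = B' * C) (hS : D * S = S' * D) (hT : D * T = T' * D) :
    (C ⊗ₖ D) * (A ⊗ₖ S + B ⊗ₖ T) = (A' ⊗ₖ S' + B' ⊗ₖ T') * (C ⊗ₖ D) := by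
  simp only [Matrix.mul_add, Matrix.add_mul, ← Matrix.mul_kronecker_mul, hA, hB, hS, hT]

/-- The one-grabit difference map `∂₁ : ℝ⁴ → ℝ²`, as a matrix; see `del2b4_eq_mulVec`. -/
def diffMatrix : Matrix (Fin 2) (Fin 4) ℝ := !![1, -1, 0, 0; 0, 0, 1, -1]

/-- The exchange of the byte-4 values `0 ↔ 1` with probability `r`, that is `R2mat r` extended by
zero on the values `2, 3`. -/
def lowExchange (r : ℝ) : Matrix (Fin 4) (Fin 4) ℝ :=
  !![1 - r, r, 0, 0; r, 1 - r, 0, 0; 0, 0, 0, 0; 0, 0, 0, 0]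

/-- The projection onto the byte-4 values `2, 3`, which encode the logical value `1`. -/
def highProjection : Matrix (Fin 4) (Fin 4) ℝ := Matrix.diagonal ![0, 0, 1, 1]

/-- The projection of a two-valued factor onto the logical value `i`. -/
def logicalProjection (i : Fin 2) : Matrix (Fin 2) (Fin 2) ℝ := Matrix.single i i 1

/-- The matrix of the rotation of the plane by the angle `φ`. -/
noncomputable def planeRotation (φ : ℝ) : Matrix (Fin 2) (Fin 2) ℝ :=
  !![Real.cos φ, -Real.sin φ; Real.sin φ, Real.cos φ]

lemma del2b4_eq_mulVec (P : Fin 4 × Fin 4 → ℝ) :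
    del2b4 P = (diffMatrix ⊗ₖ diffMatrix).mulVec P := by
  ext ⟨i, j⟩
  fin_cases i <;> fin_cases j <;>
    simp [del2b4, b4, diffMatrix, Matrix.mulVec, dotProduct, Fintype.sum_prod_type,
      Fin.sum_univ_four]

lemma Sfull_eq_kronecker (q r : ℝ) :
    Sfull q r = lowExchange r ⊗ₖ 1 + highProjection ⊗ₖ S_rot q := by
  ext ⟨i, k⟩ ⟨j, l⟩
  fin_cases i <;> fin_cases j <;>
    simp [Sfull, R2mat, lowExchange, highProjection, Matrix.one_apply]

lemma Utilde_eq_kronecker (φ : ℝ) :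
    Utilde φ = logicalProjection 0 ⊗ₖ 1 + logicalProjection 1 ⊗ₖ planeRotation φ := by
  ext ⟨i, k⟩ ⟨j, l⟩
  fin_cases i <;> fin_cases j <;> simp [Utilde, logicalProjection, planeRotation, Matrix.one_apply]

lemma lowExchange_nonneg {r : ℝ} (hr : r ∈ Set.Icc 0 1) (i j : Fin 4) : 0 ≤ lowExchange r i j := by
  fin_cases i <;> fin_cases j <;> simp [lowExchange, hr.1, hr.2]

lemma highProjection_nonneg (i j : Fin 4) : 0 ≤ highProjection i j := by
  fin_cases i <;> fin_cases j <;> simp [highProjection]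

lemma isStochastic_lowExchange_add_highProjection {r : ℝ} (hr : r ∈ Set.Icc 0 1) :
    IsStochastic (lowExchange r + highProjection) := by
  refine ⟨fun i j => add_nonneg (lowExchange_nonneg hr i j) (highProjection_nonneg i j),
    fun j => ?_⟩
  fin_cases j <;> simp [Fin.sum_univ_four, lowExchange, highProjection]

lemma isStochastic_S_rot {q : ℝ} (hq : 0 ≤ q) : IsStochastic (S_rot q) := by
  constructor
  · intro i j
    have hentry : 0 ≤ !![q, 0, 0, 1; 0, q, 1, 0; 1, 0, q, 0; 0, 1, 0, q] i j := by
      fin_cases i <;> fin_cases j <;> simp [hq]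
    exact mul_nonneg (by positivity) hentry
  · intro j
    have hsum : (1 + q)⁻¹ * q + (1 + q)⁻¹ = 1 := by
      field_simp
      ring
    fin_cases j <;> simp [Fin.sum_univ_four, S_rot, hsum, add_comm _ ((1 + q)⁻¹ * q)]

theorem isStochastic_Sfull {q r : ℝ} (hq : 0 ≤ q) (hr : r ∈ Set.Icc 0 1) :
    IsStochastic (Sfull q r) := by
  rw [Sfull_eq_kronecker]
  exact .kronecker_add_kronecker (lowExchange_nonneg hr) highProjection_nonneg
    (isStochastic_lowExchange_add_highProjection hr) .one (isStochastic_S_rot hq)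

lemma diffMatrix_mul_lowExchange (r : ℝ) :
    diffMatrix * lowExchange r = ((1 - 2 * r) • logicalProjection 0) * diffMatrix := by
  ext i j
  fin_cases i <;> fin_cases j <;>
    simp [diffMatrix, lowExchange, logicalProjection, Matrix.mul_apply, Fin.sum_univ_succ] <;> ring

lemma diffMatrix_mul_highProjection :
    diffMatrix * highProjection = logicalProjection 1 * diffMatrix := by
  ext i j
  fin_cases i <;> fin_cases j <;>
    simp [diffMatrix, highProjection, logicalProjection, Matrix.mul_apply, Fin.sum_univ_succ]

lemma diffMatrix_mul_S_rot (q : ℝ) :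
    diffMatrix * S_rot q = ((1 / (1 + q)) • !![q, -1; 1, q]) * diffMatrix := by
  rw [S_rot, Matrix.mul_smul, Matrix.smul_mul]
  congr 1
  ext i j
  fin_cases i <;> fin_cases j <;> simp [diffMatrix, Matrix.mul_apply, Fin.sum_univ_succ]

theorem diffMatrix_kronecker_mul_Sfull {φ q r N : ℝ} (hr : 1 - 2 * r = N)
    (hrot : (1 / (1 + q)) • !![q, -1; 1, q] = N • planeRotation φ) :
    (diffMatrix ⊗ₖ diffMatrix) * Sfull q r
      = N • (Utilde φ * (diffMatrix ⊗ₖ diffMatrix)) := by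
  have hlow : diffMatrix * lowExchange r = (N • logicalProjection 0) * diffMatrix :=
    hr ▸ diffMatrix_mul_lowExchange r
  have hone :
      diffMatrix * (1 : Matrix (Fin 4) (Fin 4) ℝ) = (1 : Matrix (Fin 2) (Fin 2) ℝ) * diffMatrix :=
    by rw [Matrix.mul_one, Matrix.one_mul]
  have hS : diffMatrix * S_rot q = (N • planeRotation φ) * diffMatrix :=
    hrot ▸ diffMatrix_mul_S_rot q
  rw [Sfull_eq_kronecker, kronecker_mul_kronecker_add_kronecker hlow
    diffMatrix_mul_highProjection hone hS, Utilde_eq_kronecker, Matrix.smul_kronecker,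
    Matrix.kronecker_smul, ← smul_add, Matrix.smul_mul]

lemma sqrt_one_add_cot_sq {φ : ℝ} (hφ : 0 < Real.sin φ) :
    √(1 + Real.cot φ ^ 2) = 1 / Real.sin φ := by
  have hsq : 1 + Real.cot φ ^ 2 = (1 / Real.sin φ) ^ 2 := by
    rw [Real.cot_eq_cos_div_sin]
    field_simp
    exact Real.sin_sq_add_cos_sq φ
  rw [hsq, Real.sqrt_sq (by positivity)]

lemma smul_cot_eq_smul_planeRotation {φ : ℝ} (hφ : 0 < Real.sin φ) :
    (1 / (1 + Real.cot φ)) • !![Real.cot φ, -1; 1, Real.cot φ]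
      = (√(1 + Real.cot φ ^ 2) / (1 + Real.cot φ)) • planeRotation φ := by
  have hrot : !![Real.cot φ, -1; 1, Real.cot φ] = (1 / Real.sin φ) • planeRotation φ := by
    ext i j
    fin_cases i <;> fin_cases j <;>
      simp [planeRotation, Real.cot_eq_cos_div_sin, hφ.ne', div_eq_inv_mul]
  rw [sqrt_one_add_cot_sq hφ, hrot, smul_smul, div_mul_eq_mul_div, one_mul]

lemma sqrt_one_add_sq_le {q : ℝ} (hq : 0 ≤ q) : √(1 + q ^ 2) ≤ 1 + q :=
  Real.sqrt_le_iff.2 ⟨by positivity, by nlinarith⟩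

/-- for `0 < φ ≤ π/2`, `q = cot φ`, `𝒩 = √(1+q²)/(1+q)`, `r₀ = (1−𝒩)/2`,
the matrix `Sfull q r₀` is stochastic and `∂₂ ∘ Sfull = 𝒩 · Ũ_φ ∘ ∂₂`. -/
theorem Sfull_stochastic_and_intertwines (φ q N r₀ : ℝ)
    (hφ₀ : 0 < φ) (hφ₁ : φ ≤ Real.pi / 2) (hq : q = Real.cot φ)
    (hN : N = Real.sqrt (1 + q ^ 2) / (1 + q)) (hr₀ : r₀ = (1 - N) / 2) :
    IsStochastic (Sfull q r₀) ∧
      ∀ P : Fin 4 × Fin 4 → ℝ,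
        del2b4 ((Sfull q r₀).mulVec P) = N • (Utilde φ).mulVec (del2b4 P) := by
  have hsin : 0 < Real.sin φ :=
    Real.sin_pos_of_pos_of_lt_pi hφ₀ (hφ₁.trans_lt (half_lt_self Real.pi_pos))
  have hcos : 0 ≤ Real.cos φ := Real.cos_nonneg_of_neg_pi_div_two_le_of_le (by linarith) hφ₁
  have hq_nonneg : 0 ≤ q := by
    rw [hq, Real.cot_eq_cos_div_sin]
    positivity
  have hN_nonneg : 0 ≤ N := hN ▸ by positivity
  have hN_le_one : N ≤ 1 := hN ▸ div_le_one_of_le₀ (sqrt_one_add_sq_le hq_nonneg) (by positivity)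
  have hrot : (1 / (1 + q)) • !![q, -1; 1, q] = N • planeRotation φ := by
    rw [hN, hq]
    exact smul_cot_eq_smul_planeRotation hsin
  refine ⟨isStochastic_Sfull hq_nonneg ⟨by linarith, by linarith⟩, fun P => ?_⟩
  rw [del2b4_eq_mulVec, del2b4_eq_mulVec, Matrix.mulVec_mulVec,
    diffMatrix_kronecker_mul_Sfull (by linarith) hrot, Matrix.smul_mulVec, Matrix.mulVec_mulVec]
end

section
/- Let q ≥ 0 and T = (1/(1+q))·[[q,−1],[1,q]] acting on ℝ². Then for every ψ ∈ ℝ², ‖Tψ‖₁ ≥ ((1+q²)/(1+q)²)·‖ψ‖₁, and equality holds for the nonzero vector ψ = (1,q). Hence the destructive-interference measure of the stochastic emulation of the phase gate with q = |cot φ| equals 𝒟_{R_φ} = 1 − (1+q²)/(1+q)². -/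
open scoped BigOperators Matrix

/-- The ℓ¹ norm of a vector on a finite index set. -/
noncomputable def l1norm {α : Type*} [Fintype α] (f : α → ℝ) : ℝ := ∑ a, |f a|

/-- The effective map on grabit amplitudes induced by the stochastic emulation of the
phase gate, with `q = |cot φ|`. -/
noncomputable def Tphase (q : ℝ) : Matrix (Fin 2) (Fin 2) ℝ :=
  (1 / (1 + q)) • !![q, -1; 1, q]

/-! The inverse of `Tphase q` is `((1 + q) / (1 + q ^ 2)) • !![q, 1; -1, q]`, both of whose columns
have ℓ¹ norm `(1 + q) ^ 2 / (1 + q ^ 2)`. As the largest column norm is the `ℓ¹ → ℓ¹` operator norm,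
its reciprocal is the least stretching factor of `Tphase q`. It is attained on the columns of the
inverse, the second of which is proportional to `(1, q)`. -/

section L1Norm

variable {α β : Type*} [Fintype α] [Fintype β]

theorem l1norm_eq_norm_toLp (f : α → ℝ) : l1norm f = ‖WithLp.toLp 1 f‖ := by
  simp only [l1norm, PiLp.norm_eq_of_L1, Real.norm_eq_abs]

theorem l1norm_pos {f : α → ℝ} (hf : f ≠ 0) : 0 < l1norm f := by
  rwa [l1norm_eq_norm_toLp, norm_pos_iff, ne_eq, WithLp.toLp_eq_zero]

theorem l1norm_smul (r : ℝ) (f : α → ℝ) : l1norm (r • f) = |r| * l1norm f := by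
  rw [l1norm_eq_norm_toLp, l1norm_eq_norm_toLp, WithLp.toLp_smul, norm_smul, Real.norm_eq_abs]

theorem l1norm_sum_le {ι : Type*} (s : Finset ι) (f : ι → α → ℝ) :
    l1norm (∑ i ∈ s, f i) ≤ ∑ i ∈ s, l1norm (f i) := by
  simp only [l1norm_eq_norm_toLp, WithLp.toLp_sum]
  exact norm_sum_le s _

theorem l1norm_mulVec_le {A : Matrix α β ℝ} {c : ℝ} (hA : ∀ j, l1norm (A.col j) ≤ c)
    (ψ : β → ℝ) : l1norm (A *ᵥ ψ) ≤ c * l1norm ψ := by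
  calc
    l1norm (A *ᵥ ψ) = l1norm (∑ j, ψ j • A.col j) := by
      simp only [Matrix.mulVec_eq_sum, op_smul_eq_smul, Matrix.col]
    _ ≤ ∑ j, l1norm (ψ j • A.col j) := l1norm_sum_le _ _
    _ = ∑ j, |ψ j| * l1norm (A.col j) := by simp only [l1norm_smul]
    _ ≤ ∑ j, |ψ j| * c := by gcongr with j; exact hA j
    _ = c * l1norm ψ := by rw [← Finset.sum_mul, mul_comm, l1norm]

theorem l1norm_le_mul_l1norm_mulVec [DecidableEq β] {A : Matrix α β ℝ} {B : Matrix β α ℝ} {c : ℝ}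
    (hBA : B * A = 1) (hB : ∀ j, l1norm (B.col j) ≤ c) (ψ : β → ℝ) :
    l1norm ψ ≤ c * l1norm (A *ᵥ ψ) := by
  calc
    l1norm ψ = l1norm (B *ᵥ (A *ᵥ ψ)) := by rw [Matrix.mulVec_mulVec, hBA, Matrix.one_mulVec]
    _ ≤ c * l1norm (A *ᵥ ψ) := l1norm_mulVec_le hB _

theorem isGreatest_one_sub_l1norm_div {T : (α → ℝ) → β → ℝ} {c : ℝ} {ψ₀ : α → ℝ}
    (hT : ∀ ψ, c * l1norm ψ ≤ l1norm (T ψ)) (hψ₀ : ψ₀ ≠ 0)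
    (hTψ₀ : l1norm (T ψ₀) = c * l1norm ψ₀) :
    IsGreatest {x : ℝ | ∃ ψ : α → ℝ, ψ ≠ 0 ∧ x = 1 - l1norm (T ψ) / l1norm ψ} (1 - c) := by
  constructor
  · exact ⟨ψ₀, hψ₀, by rw [hTψ₀, mul_div_cancel_right₀ _ (l1norm_pos hψ₀).ne']⟩
  · rintro _ ⟨ψ, hψ, rfl⟩
    exact sub_le_sub_left ((le_div_iff₀ (l1norm_pos hψ)).mpr (hT ψ)) 1

end L1Norm

/-- The inverse of `Tphase q` for `1 + q ≠ 0`, written out so that its columns can be read off. -/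
noncomputable def TphaseInv (q : ℝ) : Matrix (Fin 2) (Fin 2) ℝ :=
  ((1 + q) / (1 + q ^ 2)) • !![q, 1; -1, q]

theorem TphaseInv_mul_Tphase {q : ℝ} (hq : 1 + q ≠ 0) : TphaseInv q * Tphase q = 1 := by
  have hq2 : 1 + q ^ 2 ≠ 0 := by positivity
  have hmul : (!![q, 1; -1, q] * !![q, -1; 1, q] : Matrix (Fin 2) (Fin 2) ℝ) =
      (1 + q ^ 2) • (1 : Matrix (Fin 2) (Fin 2) ℝ) := by
    simp [Matrix.one_fin_two, sq, mul_comm, add_comm]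
  have hscalar : (1 + q) / (1 + q ^ 2) * (1 / (1 + q)) * (1 + q ^ 2) = 1 := by field_simp
  rw [TphaseInv, Tphase, Matrix.smul_mul, Matrix.mul_smul, hmul, smul_smul, smul_smul, hscalar,
    one_smul]

theorem l1norm_col_TphaseInv {q : ℝ} (hq : 0 ≤ q) (j : Fin 2) :
    l1norm ((TphaseInv q).col j) = (1 + q) ^ 2 / (1 + q ^ 2) := by
  have hcol : l1norm (!![q, 1; -1, q].col j) = 1 + q := by
    fin_cases j <;> simp [l1norm, abs_of_nonneg hq, add_comm]
  calc
    l1norm ((TphaseInv q).col j)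
      = l1norm (((1 + q) / (1 + q ^ 2)) • !![q, 1; -1, q].col j) := rfl
    _ = (1 + q) / (1 + q ^ 2) * (1 + q) := by
      rw [l1norm_smul, hcol, abs_of_nonneg (by positivity)]
    _ = (1 + q) ^ 2 / (1 + q ^ 2) := by ring

theorem Tphase_mulVec_one_q (q : ℝ) :
    Tphase q *ᵥ ![1, q] = ((1 + q ^ 2) / (1 + q)) • ![0, 1] := by
  have hmul : !![q, -1; 1, q] *ᵥ ![1, q] = (1 + q ^ 2) • ![0, 1] := by
    ext i
    fin_cases i <;> simp [Matrix.mulVec, dotProduct, sq]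
  rw [Tphase, Matrix.smul_mulVec, hmul, smul_smul, one_div_mul_eq_div]

theorem l1norm_Tphase_mulVec_one_q {q : ℝ} (hq : 0 ≤ q) :
    l1norm (Tphase q *ᵥ ![1, q]) = (1 + q ^ 2) / (1 + q) ^ 2 * l1norm ![1, q] := by
  have hψ : l1norm ![1, q] = 1 + q := by simp [l1norm, abs_of_nonneg hq]
  have he : l1norm (![0, 1] : Fin 2 → ℝ) = 1 := by simp [l1norm]
  rw [Tphase_mulVec_one_q, l1norm_smul, he, hψ, abs_of_nonneg (by positivity)]
  field_simp

theorem mul_l1norm_le_l1norm_Tphase_mulVec {q : ℝ} (hq : 0 ≤ q) (ψ : Fin 2 → ℝ) :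
    (1 + q ^ 2) / (1 + q) ^ 2 * l1norm ψ ≤ l1norm (Tphase q *ᵥ ψ) := by
  rw [← inv_div, inv_mul_le_iff₀ (by positivity)]
  exact l1norm_le_mul_l1norm_mulVec (TphaseInv_mul_Tphase (by positivity))
    (fun j ↦ (l1norm_col_TphaseInv hq j).le) ψ

/-- `‖Tψ‖₁ ≥ ((1+q²)/(1+q)²)‖ψ‖₁` for all `ψ`, with equality at the
nonzero vector `ψ = (1,q)`; hence the destructive-interference measure of the phase-gate
emulation equals `1 − (1+q²)/(1+q)²`. -/
theorem phase_gate_destructive_interference (q : ℝ) (hq : 0 ≤ q) :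
    (∀ ψ : Fin 2 → ℝ,
      ((1 + q ^ 2) / (1 + q) ^ 2) * l1norm ψ ≤ l1norm ((Tphase q).mulVec ψ)) ∧
    (![1, q] ≠ (0 : Fin 2 → ℝ)) ∧
    l1norm ((Tphase q).mulVec ![1, q]) = ((1 + q ^ 2) / (1 + q) ^ 2) * l1norm ![1, q] ∧
    IsGreatest {x : ℝ | ∃ ψ : Fin 2 → ℝ,
        ψ ≠ 0 ∧ x = 1 - l1norm ((Tphase q).mulVec ψ) / l1norm ψ}
      (1 - (1 + q ^ 2) / (1 + q) ^ 2) := by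
  have hne : ![1, q] ≠ (0 : Fin 2 → ℝ) := fun h ↦ one_ne_zero (congrFun h 0)
  have hle := mul_l1norm_le_l1norm_Tphase_mulVec hq
  have heq := l1norm_Tphase_mulVec_one_q hq
  exact ⟨hle, hne, heq, isGreatest_one_sub_l1norm_div hle hne heq⟩
end
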